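/- Fix positive reals p₋₁, p₀, p₁, let P(1) = p₋₁ + p₀ + p₁ and ρ = 1/(p₀ + 2√(p₋₁p₁)) (note 1/P(1) ≤ ρ). Let f_{n,h} denote the total weight of Motzkin walks of length n whose height (max_{0≤j≤n} ω_j) equals h. Then for all real z with 0 < z < 1/P(1) the discriminant (1−p₀z)² − 4p₋₁p₁z² is positive; setting u₂(z) = (1 − p₀z + √((1−p₀z)² − 4p₋₁p₁z²))/(2p₁z), one has u₂(z) > 1, and for all real u with 0 ≤ u ≤ 1: Σ_{n≥0} zⁿ (Σ_{h≥0} f_{n,h} u^h) = (1/(1 − zP(1))) · (u₂(z) − 1)/(u₂(z) − u). -/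

import Mathlib

open scoped BigOperators Classical

/-- Value of a step encoded by `Fin 3`: `0 ↦ -1`, `1 ↦ 0`, `2 ↦ +1`. -/
def stepVal (s : Fin 3) : ℤ := (s : ℤ) - 1

/-- Weight of a single step: `p₋₁` for `-1`, `p₀` for `0`, `p₁` for `+1`. -/
def stepWeight (pm p0 p1 : ℝ) (s : Fin 3) : ℝ :=
  if s = 0 then pm else if s = 1 then p0 else p1

/-- Weight of a Motzkin walk (product of its step weights). -/
def walkWeight (pm p0 p1 : ℝ) {n : ℕ} (w : Fin n → Fin 3) : ℝ :=
  ∏ i, stepWeight pm p0 p1 (w i)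

/-- Partial sum `ω_j` of the walk `w`. -/
def psum {n : ℕ} (w : Fin n → Fin 3) (j : ℕ) : ℤ :=
  ∑ i ∈ Finset.univ.filter (fun i : Fin n => (i : ℕ) < j), stepVal (w i)

/-- Total weight of Motzkin bridges of length `n`. -/
noncomputable def bridgeW (pm p0 p1 : ℝ) (n : ℕ) : ℝ :=
  ∑ w ∈ Finset.univ.filter (fun w : Fin n → Fin 3 => psum w n = 0),
    walkWeight pm p0 p1 w

/-- Number of returns to zero of a walk of length `n`. -/
def retZero {n : ℕ} (w : Fin n → Fin 3) : ℕ :=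
  ((Finset.Icc 1 n).filter (fun j => psum w j = 0)).card

/-- Total weight of walks of length `n` with exactly `k` returns to zero. -/
noncomputable def walkRetW (pm p0 p1 : ℝ) (n k : ℕ) : ℝ :=
  ∑ w ∈ Finset.univ.filter (fun w : Fin n → Fin 3 => retZero w = k),
    walkWeight pm p0 p1 w

/-- Number of sign changes of a walk of length `n`. -/
def signChanges {n : ℕ} (w : Fin n → Fin 3) : ℕ :=
  (((Finset.range (n+1)) ×ˢ (Finset.range (n+1))).filter
    (fun p => p.1 < p.2 ∧ psum w p.1 * psum w p.2 < 0 ∧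
      ∀ l ∈ Finset.Ioo p.1 p.2, psum w l = 0)).card

/-- Total weight of bridges of length `n` with exactly `k` sign changes. -/
noncomputable def bridgeSignW (pm p0 p1 : ℝ) (n k : ℕ) : ℝ :=
  ∑ w ∈ Finset.univ.filter
      (fun w : Fin n → Fin 3 => psum w n = 0 ∧ signChanges w = k),
    walkWeight pm p0 p1 w

/-- Total weight of positive excursions of length `n`. -/
noncomputable def posExcW (pm p0 p1 : ℝ) (n : ℕ) : ℝ :=
  ∑ w ∈ Finset.univ.filter
      (fun w : Fin n → Fin 3 => psum w n = 0 ∧ ∀ j ∈ Finset.range (n+1), 0 ≤ psum w j),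
    walkWeight pm p0 p1 w

/-- Total weight of negative excursions of length `n`. -/
noncomputable def negExcW (pm p0 p1 : ℝ) (n : ℕ) : ℝ :=
  ∑ w ∈ Finset.univ.filter
      (fun w : Fin n → Fin 3 => psum w n = 0 ∧ ∀ j ∈ Finset.range (n+1), psum w j ≤ 0),
    walkWeight pm p0 p1 w

/-- A positive bridge: a bridge whose last nonzero partial sum is positive. -/
def IsPosBridge {n : ℕ} (w : Fin n → Fin 3) : Prop :=
  psum w n = 0 ∧ ∃ j ∈ Finset.range (n+1),
    0 < psum w j ∧ ∀ l ∈ Finset.Ioc j n, psum w l = 0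

/-- A negative bridge: a bridge whose last nonzero partial sum is negative. -/
def IsNegBridge {n : ℕ} (w : Fin n → Fin 3) : Prop :=
  psum w n = 0 ∧ ∃ j ∈ Finset.range (n+1),
    psum w j < 0 ∧ ∀ l ∈ Finset.Ioc j n, psum w l = 0

instance {n : ℕ} (w : Fin n → Fin 3) : Decidable (IsPosBridge w) := by
  unfold IsPosBridge; infer_instance

instance {n : ℕ} (w : Fin n → Fin 3) : Decidable (IsNegBridge w) := by
  unfold IsNegBridge; infer_instance

/-- Total weight of positive bridges of length `n` with `k` sign changes. -/
noncomputable def posBridgeSignW (pm p0 p1 : ℝ) (n k : ℕ) : ℝ :=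
  ∑ w ∈ Finset.univ.filter
      (fun w : Fin n → Fin 3 => IsPosBridge w ∧ signChanges w = k),
    walkWeight pm p0 p1 w

/-- Total weight of negative bridges of length `n` with `k` sign changes. -/
noncomputable def negBridgeSignW (pm p0 p1 : ℝ) (n k : ℕ) : ℝ :=
  ∑ w ∈ Finset.univ.filter
      (fun w : Fin n → Fin 3 => IsNegBridge w ∧ signChanges w = k),
    walkWeight pm p0 p1 w

/-- Total weight of walks of length `n` with `k` sign changes. -/
noncomputable def walkSignW (pm p0 p1 : ℝ) (n k : ℕ) : ℝ :=
  ∑ w ∈ Finset.univ.filter (fun w : Fin n → Fin 3 => signChanges w = k),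
    walkWeight pm p0 p1 w

/-- Height of a walk of length `n` (as a natural number; it is `max_j ω_j ≥ 0`). -/
def height {n : ℕ} (w : Fin n → Fin 3) : ℕ :=
  (Finset.range (n+1)).sup (fun j => (psum w j).toNat)

/-- Total weight of walks of length `n` of height exactly `h`. -/
noncomputable def heightW (pm p0 p1 : ℝ) (n h : ℕ) : ℝ :=
  ∑ w ∈ Finset.univ.filter (fun w : Fin n → Fin 3 => height w = h),
    walkWeight pm p0 p1 w

theorem psum_zero {n : ℕ} (w : Fin n → Fin 3) : psum w 0 = 0 := by
  simp [psum]

theorem psum_cons_succ {n : ℕ} (s : Fin 3) (w : Fin n → Fin 3) (j : ℕ) :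
    psum (Fin.cons s w : Fin (n + 1) → Fin 3) (j + 1) = stepVal s + psum w j := by
  simp [psum, Finset.sum_filter, Fin.sum_univ_succ]

theorem height_le_iff {n : ℕ} (w : Fin n → Fin 3) (m : ℕ) :
    height w ≤ m ↔ ∀ j ≤ n, psum w j ≤ m := by
  simp [height, Finset.sup_le_iff]

theorem height_cons_le_iff {n : ℕ} (s : Fin 3) (w : Fin n → Fin 3) (m : ℕ) :
    height (Fin.cons s w : Fin (n + 1) → Fin 3) ≤ m ↔
      ∀ j ≤ n, stepVal s + psum w j ≤ m := by
  rw [height_le_iff]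
  constructor
  · intro h j hj
    rw [← psum_cons_succ]
    exact h (j + 1) (by omega)
  · rintro h (_ | j) hj
    · simp [psum_zero]
    · rw [psum_cons_succ]
      exact h j (by omega)

theorem height_cons_down {n : ℕ} (w : Fin n → Fin 3) :
    height (Fin.cons 0 w : Fin (n + 1) → Fin 3) = height w - 1 := by
  refine eq_of_forall_ge_iff fun m => ?_
  rw [height_cons_le_iff, tsub_le_iff_right, height_le_iff]
  refine forall₂_congr fun j _ => ?_
  simp only [stepVal, Fin.val_zero]
  omega

theorem height_cons_level {n : ℕ} (w : Fin n → Fin 3) :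
    height (Fin.cons 1 w : Fin (n + 1) → Fin 3) = height w := by
  refine eq_of_forall_ge_iff fun m => ?_
  rw [height_cons_le_iff, height_le_iff]
  simp [stepVal]

theorem height_cons_up {n : ℕ} (w : Fin n → Fin 3) :
    height (Fin.cons 2 w : Fin (n + 1) → Fin 3) = height w + 1 := by
  refine eq_of_forall_ge_iff fun m => ?_
  rw [height_cons_le_iff]
  have hval : stepVal 2 = 1 := by simp [stepVal]
  rw [hval]
  cases m with
  | zero =>
    have h0 := psum_zero w
    simp only [Nat.le_zero_eq, Nat.add_eq_zero_iff, one_ne_zero, and_false, iff_false]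
    intro h
    have := h 0 (Nat.zero_le n)
    omega
  | succ m =>
    rw [Nat.add_le_add_iff_right, height_le_iff]
    refine forall₂_congr fun j _ => ?_
    omega

/-- The polynomial `∑_w weight(w) u^height(w)` over walks `w` of length `n`. -/
noncomputable def heightPoly (pm p0 p1 : ℝ) (n : ℕ) (u : ℝ) : ℝ :=
  ∑ w : Fin n → Fin 3, walkWeight pm p0 p1 w * u ^ height w

theorem walkWeight_cons (pm p0 p1 : ℝ) {n : ℕ} (s : Fin 3) (w : Fin n → Fin 3) :
    walkWeight pm p0 p1 (Fin.cons s w : Fin (n + 1) → Fin 3) =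
      stepWeight pm p0 p1 s * walkWeight pm p0 p1 w := by
  simp [walkWeight, Fin.prod_univ_succ]

theorem walkWeight_nonneg {pm p0 p1 : ℝ} (hpm : 0 ≤ pm) (hp0 : 0 ≤ p0) (hp1 : 0 ≤ p1)
    {n : ℕ} (w : Fin n → Fin 3) : 0 ≤ walkWeight pm p0 p1 w := by
  refine Finset.prod_nonneg fun i _ => ?_
  unfold stepWeight
  split_ifs <;> assumption

theorem heightPoly_zero (pm p0 p1 u : ℝ) : heightPoly pm p0 p1 0 u = 1 := by
  simp [heightPoly, walkWeight, height, psum]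

theorem sum_walk_succ {n : ℕ} (f : (Fin (n + 1) → Fin 3) → ℝ) :
    ∑ w, f w = ∑ w : Fin n → Fin 3,
      (f (Fin.cons 0 w) + f (Fin.cons 1 w) + f (Fin.cons 2 w)) := by
  rw [← (Fin.consEquiv fun _ => Fin 3).sum_comp, Fintype.sum_prod_type, Fin.sum_univ_three]
  simp [Finset.sum_add_distrib, Fin.consEquiv]

theorem heightPoly_succ (pm p0 p1 : ℝ) (n : ℕ) (u : ℝ) :
    u * heightPoly pm p0 p1 (n + 1) u =
      (pm + p0 * u + p1 * u ^ 2) * heightPoly pm p0 p1 n u -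
        pm * (1 - u) * heightPoly pm p0 p1 n 0 := by
  simp only [heightPoly]
  rw [sum_walk_succ, Finset.mul_sum, Finset.mul_sum, Finset.mul_sum, ← Finset.sum_sub_distrib]
  refine Finset.sum_congr rfl fun w _ => ?_
  rw [height_cons_down, height_cons_level, height_cons_up]
  simp only [walkWeight_cons]
  have h0 : stepWeight pm p0 p1 0 = pm := by simp [stepWeight]
  have h1 : stepWeight pm p0 p1 1 = p0 := by simp [stepWeight]
  have h2 : stepWeight pm p0 p1 2 = p1 := by simp [stepWeight]
  rw [h0, h1, h2]
  cases height w with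
  | zero => simp; ring
  | succ h => simp; ring

theorem sum_walkWeight (pm p0 p1 : ℝ) (n : ℕ) :
    ∑ w : Fin n → Fin 3, walkWeight pm p0 p1 w = (pm + p0 + p1) ^ n := by
  induction n with
  | zero => simp [walkWeight]
  | succ n ih =>
    rw [sum_walk_succ, pow_succ, ← ih, Finset.sum_mul]
    refine Finset.sum_congr rfl fun w _ => ?_
    simp only [walkWeight_cons, stepWeight]
    simp
    ring

theorem heightPoly_nonneg {pm p0 p1 : ℝ} (hpm : 0 ≤ pm) (hp0 : 0 ≤ p0) (hp1 : 0 ≤ p1)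
    (n : ℕ) {u : ℝ} (hu : 0 ≤ u) : 0 ≤ heightPoly pm p0 p1 n u :=
  Finset.sum_nonneg fun w _ => mul_nonneg (walkWeight_nonneg hpm hp0 hp1 w) (pow_nonneg hu _)

theorem heightPoly_le {pm p0 p1 : ℝ} (hpm : 0 ≤ pm) (hp0 : 0 ≤ p0) (hp1 : 0 ≤ p1)
    (n : ℕ) {u : ℝ} (hu : 0 ≤ u) (hu1 : u ≤ 1) :
    heightPoly pm p0 p1 n u ≤ (pm + p0 + p1) ^ n := by
  rw [← sum_walkWeight]
  exact Finset.sum_le_sum fun w _ =>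
    mul_le_of_le_one_right (walkWeight_nonneg hpm hp0 hp1 w) (pow_le_one₀ hu hu1)

theorem hasSum_heightW (pm p0 p1 : ℝ) (n : ℕ) (u : ℝ) :
    HasSum (fun h => heightW pm p0 p1 n h * u ^ h) (heightPoly pm p0 p1 n u) := by
  have h : HasSum (fun h : ℕ => ∑ w : Fin n → Fin 3,
      if h = height w then walkWeight pm p0 p1 w * u ^ height w else 0)
      (heightPoly pm p0 p1 n u) :=
    hasSum_sum fun w _ => hasSum_ite_eq (height w) _
  convert h using 2 with k
  rw [heightW, Finset.sum_filter, Finset.sum_mul]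
  refine Finset.sum_congr rfl fun w _ => ?_
  by_cases hw : height w = k
  · simp [hw]
  · simp [hw, Ne.symm hw]

theorem heightW_nonneg {pm p0 p1 : ℝ} (hpm : 0 ≤ pm) (hp0 : 0 ≤ p0) (hp1 : 0 ≤ p1)
    (n h : ℕ) : 0 ≤ heightW pm p0 p1 n h :=
  Finset.sum_nonneg fun w _ => walkWeight_nonneg hpm hp0 hp1 w

theorem norm_pow_mul_heightPoly_le {pm p0 p1 z : ℝ} (hpm : 0 ≤ pm) (hp0 : 0 ≤ p0)
    (hp1 : 0 ≤ p1) (hz : 0 ≤ z) (n : ℕ) {u : ℝ} (hu : u ∈ Set.Icc (0 : ℝ) 1) :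
    ‖z ^ n * heightPoly pm p0 p1 n u‖ ≤ (z * (pm + p0 + p1)) ^ n := by
  rw [Real.norm_of_nonneg
    (mul_nonneg (pow_nonneg hz n) (heightPoly_nonneg hpm hp0 hp1 n hu.1)), mul_pow]
  exact mul_le_mul_of_nonneg_left (heightPoly_le hpm hp0 hp1 n hu.1 hu.2) (pow_nonneg hz n)

/-- Location of the two kernel roots `u₁` and `u₂`, with `u₁ u₂ = p₋₁ / p₁`. -/
theorem kernel_roots {pm p0 p1 z : ℝ} (hpm : 0 < pm) (hp1 : 0 < p1)
    (hz : 0 < z) (hzP : z * (pm + p0 + p1) < 1) :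
    0 < (1 - p0 * z) ^ 2 - 4 * pm * p1 * z ^ 2 ∧
    ∃ u₁ u₂ : ℝ, u₂ = (1 - p0 * z + √((1 - p0 * z) ^ 2 - 4 * pm * p1 * z ^ 2)) / (2 * p1 * z) ∧
      0 < u₁ ∧ u₁ < 1 ∧ 1 < u₂ ∧ p1 * (u₁ * u₂) = pm ∧ p1 * z * (u₁ + u₂) = 1 - p0 * z := by
  have ha : (pm + p1) * z < 1 - p0 * z := by linarith
  have hpos : 0 < (pm + p1) * z := by positivity
  have hsq : ((pm - p1) * z) ^ 2 < (1 - p0 * z) ^ 2 - 4 * pm * p1 * z ^ 2 := by nlinarith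
  have hD : 0 < (1 - p0 * z) ^ 2 - 4 * pm * p1 * z ^ 2 := (sq_nonneg _).trans_lt hsq
  refine ⟨hD, ?_⟩
  have habs := Real.lt_sqrt_of_sq_lt (by rwa [sq_abs] : |(pm - p1) * z| ^ 2 < _)
  have hgap : 1 - p0 * z - 2 * p1 * z < √((1 - p0 * z) ^ 2 - 4 * pm * p1 * z ^ 2) :=
    Real.lt_sqrt_of_sq_lt (by nlinarith [mul_pos (mul_pos hp1 hz) (sub_pos.mpr ha)])
  have hroot := Real.sq_sqrt hD.le
  set r := √((1 - p0 * z) ^ 2 - 4 * pm * p1 * z ^ 2)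
  have hlo := (abs_lt.mp habs).1
  have h2 : 0 < 2 * p1 * z := by positivity
  refine ⟨(1 - p0 * z - r) / (2 * p1 * z), (1 - p0 * z + r) / (2 * p1 * z), rfl,
    div_pos ?_ h2, ?_, ?_, ?_, ?_⟩
  · have : 0 < pm * p1 * z ^ 2 := by positivity
    nlinarith
  · rw [div_lt_one h2]; linarith
  · rw [one_lt_div h2]; linarith
  · field_simp
    linear_combination -hroot
  · field_simp
    ring

theorem kernel_equation {pm p0 p1 z : ℝ} (hpm : 0 ≤ pm) (hp0 : 0 ≤ p0) (hp1 : 0 ≤ p1)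
    (hz : 0 ≤ z) (hzP : z * (pm + p0 + p1) < 1) {u : ℝ} (hu : u ∈ Set.Icc (0 : ℝ) 1) :
    (u - z * (pm + p0 * u + p1 * u ^ 2)) * ∑' n, z ^ n * heightPoly pm p0 p1 n u =
      u - z * pm * (1 - u) * ∑' n, z ^ n * heightPoly pm p0 p1 n 0 := by
  have hsum : ∀ v ∈ Set.Icc (0 : ℝ) 1, Summable fun n => z ^ n * heightPoly pm p0 p1 n v :=
    fun v hv => Summable.of_norm_bounded
      (summable_geometric_of_lt_one (mul_nonneg hz (by positivity)) hzP)
      fun n => norm_pow_mul_heightPoly_le hpm hp0 hp1 hz n hv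
  have hu' := hsum u hu
  have h0' := hsum 0 ⟨le_rfl, zero_le_one⟩
  have hstep : u * ∑' n, z ^ (n + 1) * heightPoly pm p0 p1 (n + 1) u =
      z * (pm + p0 * u + p1 * u ^ 2) * ∑' n, z ^ n * heightPoly pm p0 p1 n u -
        z * pm * (1 - u) * ∑' n, z ^ n * heightPoly pm p0 p1 n 0 := by
    rw [← tsum_mul_left, ← tsum_mul_left, ← tsum_mul_left,
      ← (hu'.mul_left _).tsum_sub (h0'.mul_left _)]
    refine tsum_congr fun n => ?_
    linear_combination z ^ (n + 1) * heightPoly_succ pm p0 p1 n u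
  have hsplit := hu'.tsum_eq_zero_add
  rw [pow_zero, one_mul, heightPoly_zero] at hsplit
  linear_combination u * hsplit + hstep

theorem continuousOn_tsum_heightPoly {pm p0 p1 z : ℝ} (hpm : 0 ≤ pm) (hp0 : 0 ≤ p0)
    (hp1 : 0 ≤ p1) (hz : 0 ≤ z) (hzP : z * (pm + p0 + p1) < 1) :
    ContinuousOn (fun u => ∑' n, z ^ n * heightPoly pm p0 p1 n u) (Set.Icc 0 1) := by
  refine continuousOn_tsum (fun n => ?_)
    (summable_geometric_of_lt_one (mul_nonneg hz (by positivity)) hzP)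
    fun n u hu => norm_pow_mul_heightPoly_le hpm hp0 hp1 hz n hu
  unfold heightPoly
  fun_prop

/-- A function continuous on `[0, 1]` and vanishing off one interior point vanishes there too. -/
theorem eq_zero_of_continuousOn_of_forall_ne {g : ℝ → ℝ} {a : ℝ}
    (hg : ContinuousOn g (Set.Icc 0 1)) (ha : a ∈ Set.Ioo (0 : ℝ) 1)
    (h : ∀ u ∈ Set.Icc (0 : ℝ) 1, u ≠ a → g u = 0) : g a = 0 := by
  have hnhds : Set.Icc (0 : ℝ) 1 ∈ nhds a := Icc_mem_nhds ha.1 ha.2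
  have hlim : Filter.Tendsto g (nhdsWithin a {a}ᶜ) (nhds (g a)) :=
    (hg.continuousAt hnhds).tendsto.mono_left nhdsWithin_le_nhds
  have hzero : Filter.Tendsto g (nhdsWithin a {a}ᶜ) (nhds 0) := by
    refine tendsto_const_nhds.congr' ?_
    filter_upwards [nhdsWithin_le_nhds hnhds, self_mem_nhdsWithin] with u hu hne
    exact (h u hu hne).symm
  exact tendsto_nhds_unique hlim hzero

theorem tsum_heightPoly_mul {pm p0 p1 z u₁ u₂ : ℝ} (hpm : 0 < pm) (hp0 : 0 ≤ p0) (hp1 : 0 < p1)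
    (hz : 0 < z) (hzP : z * (pm + p0 + p1) < 1) (hu₁ : 0 < u₁) (hu₁' : u₁ < 1)
    (hprod : p1 * (u₁ * u₂) = pm) (hsum : p1 * z * (u₁ + u₂) = 1 - p0 * z)
    {u : ℝ} (hu : u ∈ Set.Icc (0 : ℝ) 1) :
    z * p1 * (1 - u₁) * (u₂ - u) * ∑' n, z ^ n * heightPoly pm p0 p1 n u = 1 := by
  have hker := fun v (hv : v ∈ Set.Icc (0 : ℝ) 1) =>
    kernel_equation hpm.le hp0 hp1.le hz.le hzP hv
  have hcont := continuousOn_tsum_heightPoly hpm.le hp0 hp1.le hz.le hzP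
  set F : ℝ → ℝ := fun v => ∑' n, z ^ n * heightPoly pm p0 p1 n v
  change ∀ v ∈ Set.Icc (0 : ℝ) 1, (v - z * (pm + p0 * v + p1 * v ^ 2)) * F v =
    v - z * pm * (1 - v) * F 0 at hker
  change z * p1 * (1 - u₁) * (u₂ - u) * F u = 1
  have hfactor : ∀ v, v - z * (pm + p0 * v + p1 * v ^ 2) = z * p1 * (v - u₁) * (u₂ - v) := by
    intro v
    linear_combination z * hprod - v * hsum
  have hF0 : z * pm * (1 - u₁) * F 0 = u₁ := by
    have := hker u₁ ⟨hu₁.le, hu₁'.le⟩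
    rw [hfactor] at this
    linear_combination this
  have hne : ∀ v ∈ Set.Icc (0 : ℝ) 1, v ≠ u₁ →
      z * p1 * (1 - u₁) * (u₂ - v) * F v - 1 = 0 := by
    intro v hv hvne
    have hk := hker v hv
    rw [hfactor] at hk
    refine (mul_eq_zero.mp ?_).resolve_left (sub_ne_zero.mpr hvne)
    linear_combination (1 - u₁) * hk - (1 - v) * hF0
  by_cases h : u = u₁
  · rw [h]
    refine sub_eq_zero.mp (eq_zero_of_continuousOn_of_forall_ne
      (g := fun v => z * p1 * (1 - u₁) * (u₂ - v) * F v - 1) ?_ ⟨hu₁, hu₁'⟩ hne)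
    fun_prop
  · exact sub_eq_zero.mp (hne u hu h)

theorem summable_heightW_prod {pm p0 p1 z u : ℝ} (hpm : 0 ≤ pm) (hp0 : 0 ≤ p0) (hp1 : 0 ≤ p1)
    (hz : 0 ≤ z) (hzP : z * (pm + p0 + p1) < 1) (hu : u ∈ Set.Icc (0 : ℝ) 1) :
    Summable fun p : ℕ × ℕ => heightW pm p0 p1 p.1 p.2 * z ^ p.1 * u ^ p.2 := by
  have hrow : ∀ n, HasSum (fun h => heightW pm p0 p1 n h * z ^ n * u ^ h)
      (z ^ n * heightPoly pm p0 p1 n u) := by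
    intro n
    refine ((hasSum_heightW pm p0 p1 n u).mul_left (z ^ n)).congr_fun ?_
    intro h
    ring
  rw [summable_prod_of_nonneg fun p => mul_nonneg
    (mul_nonneg (heightW_nonneg hpm hp0 hp1 _ _) (pow_nonneg hz _)) (pow_nonneg hu.1 _)]
  refine ⟨fun n => (hrow n).summable, ?_⟩
  simp only [fun n => (hrow n).tsum_eq]
  exact Summable.of_norm_bounded
    (summable_geometric_of_lt_one (mul_nonneg hz (by positivity)) hzP)
    fun n => norm_pow_mul_heightPoly_le hpm hp0 hp1 hz n hu

/-- **Bivariate generating function of Motzkin walks by height**: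
`F(z,u) = (1/(1-zP(1)))·(u₂(z)-1)/(u₂(z)-u)`. -/
theorem height_gf (pm p0 p1 : ℝ)
    (hpm : 0 < pm) (hp0 : 0 < p0) (hp1 : 0 < p1) :
    let P1 : ℝ := pm + p0 + p1
    let u₂ : ℝ → ℝ := fun z =>
      (1 - p0 * z + Real.sqrt ((1 - p0 * z) ^ 2 - 4 * pm * p1 * z ^ 2)) / (2 * p1 * z)
    ∀ z : ℝ, 0 < z → z < 1 / P1 →
      0 < (1 - p0 * z) ^ 2 - 4 * pm * p1 * z ^ 2 ∧
      1 < u₂ z ∧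
      ∀ u : ℝ, 0 ≤ u → u ≤ 1 →
        Summable (fun p : ℕ × ℕ => heightW pm p0 p1 p.1 p.2 * z ^ p.1 * u ^ p.2) ∧
        (∑' n : ℕ, z ^ n * ∑' h : ℕ, heightW pm p0 p1 n h * u ^ h) =
          (1 / (1 - z * P1)) * ((u₂ z - 1) / (u₂ z - u)) := by
  intro P1 u₂ z hz hzP
  have hP1 : 0 < P1 := by positivity
  have hzP' : z * (pm + p0 + p1) < 1 := (lt_div_iff₀ hP1).mp hzP
  obtain ⟨hD, v₁, v₂, hv₂, hv₁0, hv₁1, hv₂1, hprod, hsum⟩ := kernel_roots hpm hp1 hz hzP'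
  have hu₂ : u₂ z = v₂ := hv₂.symm
  rw [hu₂]
  refine ⟨hD, hv₂1, fun u hu0 hu1 => ?_⟩
  have hu : u ∈ Set.Icc (0 : ℝ) 1 := ⟨hu0, hu1⟩
  refine ⟨summable_heightW_prod hpm.le hp0.le hp1.le hz.le hzP' hu, ?_⟩
  simp only [fun n => (hasSum_heightW pm p0 p1 n u).tsum_eq]
  have hmain := tsum_heightPoly_mul hpm hp0.le hp1 hz hzP' hv₁0 hv₁1 hprod hsum hu
  have hden : 1 - z * P1 = z * p1 * (1 - v₁) * (v₂ - 1) := by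
    simp only [P1]
    linear_combination z * hprod - hsum
  have h1 : v₂ - 1 ≠ 0 := by linarith
  have h2 : v₂ - u ≠ 0 := by linarith
  have h3 : 1 - v₁ ≠ 0 := by linarith
  rw [hden]
  field_simp
  linear_combination hmain
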